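/- arXiv:2506.12463 — 3 statements merged into one kernel-verified Lean document; each statement's English description precedes it below -/
import Mathlib

section
/- Assume W is strongly connected, θ_j > 0 for at least one agent j, and ω ∈ (0,1). Then the influencer's social power sp₀ is a submodular set function: for all subsets T ⊆ S ⊆ V and every agent i ∈ V \\ S, sp₀(S ∪ {i}) − sp₀(S) ≤ sp₀(T ∪ {i}) − sp₀(T). -/
open Matrix Finset

/-- `H(S) = (I - ω Σ_{j∈S} e_j e_jᵀ) (I - Θ) W`. -/
noncomputable def Hmat {n : ℕ} (W : Matrix (Fin n) (Fin n) ℝ) (θ : Fin n → ℝ) (ω : ℝ)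
    (S : Finset (Fin n)) : Matrix (Fin n) (Fin n) ℝ :=
  (1 - Matrix.diagonal (fun i => if i ∈ S then ω else 0)) *
    ((1 - Matrix.diagonal θ) * W)

/-- `p₀(S) = (I - H(S))⁻¹ (I - Θ) ω Σ_{j∈S} e_j`. -/
noncomputable def p0vec {n : ℕ} (W : Matrix (Fin n) (Fin n) ℝ) (θ : Fin n → ℝ) (ω : ℝ)
    (S : Finset (Fin n)) : Fin n → ℝ :=
  ((1 - Hmat W θ ω S)⁻¹ * (1 - Matrix.diagonal θ)).mulVec
    (fun j => if j ∈ S then ω else 0)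

/-- The influencer's social power `sp₀(S) = (𝟙ᵀ p₀(S) + 1)/(n+1)`. -/
noncomputable def sp0 {n : ℕ} (W : Matrix (Fin n) (Fin n) ℝ) (θ : Fin n → ℝ) (ω : ℝ)
    (S : Finset (Fin n)) : ℝ :=
  ((∑ i, p0vec W θ ω S i) + 1) / (n + 1)

/-!
Every agent's opinion is a convex combination of the influencer's and of the stubborn agents'
initial ones, so `q = 1 - p₀(S)` is the total weight of the latter and solves
`q = θ + w_S ⊙ (I - Θ) W q`, where `w_S` is `1 - ω` on `S` and `1` off `S`. The right-hand side `θ`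
no longer depends on `S`, and `S ↦ w_S` exchanges unions and intersections with meets and joins.
It therefore suffices that the solution `u_w` of `u = r + w ⊙ A u` is supermodular in the weight
`w ∈ [0, 1]^V`. Since `I - diag(w) A` is a monotone matrix (`0 ≤ M x` implies `0 ≤ x`), this can be
tested after applying it, where it reduces to `u_w` being monotone in `w`.
-/

lemma mulVec_mono_right {m n R : Type*} [Fintype n] [Semiring R] [PartialOrder R]
    [IsOrderedRing R] {A : Matrix m n R} (hA : ∀ i j, 0 ≤ A i j) {x y : n → R} (hxy : x ≤ y) :
    A *ᵥ x ≤ A *ᵥ y :=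
  fun i => dotProduct_le_dotProduct_of_nonneg_left hxy (hA i)

section MonotoneMatrix

variable {ι K : Type*} [Fintype ι] [Field K] [LinearOrder K] [IsStrictOrderedRing K]

/-- Monotone matrices in the sense of Collatz: `0 ≤ M x` implies `0 ≤ x`, entrywise. Equivalently,
`M` is invertible with an entrywise nonnegative inverse. -/
def IsMonotoneMatrix (M : Matrix ι ι K) : Prop :=
  ∀ x, 0 ≤ M *ᵥ x → 0 ≤ x

lemma IsMonotoneMatrix.le_of_mulVec_le {M : Matrix ι ι K} (hM : IsMonotoneMatrix M) {x y : ι → K}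
    (h : M *ᵥ x ≤ M *ᵥ y) : x ≤ y :=
  sub_nonneg.1 <| hM _ <| by rwa [mulVec_sub, sub_nonneg]

variable [DecidableEq ι]

lemma IsMonotoneMatrix.isUnit_det {M : Matrix ι ι K} (hM : IsMonotoneMatrix M) : IsUnit M.det := by
  rw [← isUnit_iff_isUnit_det, ← mulVec_injective_iff_isUnit]
  exact fun x y hxy => le_antisymm (hM.le_of_mulVec_le hxy.le) (hM.le_of_mulVec_le hxy.ge)

lemma isMonotoneMatrix_one_sub_iff {P : Matrix ι ι K} :
    IsMonotoneMatrix (1 - P) ↔ ∀ x, P *ᵥ x ≤ x → 0 ≤ x := by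
  simp only [IsMonotoneMatrix, sub_mulVec, one_mulVec, sub_nonneg]

lemma IsMonotoneMatrix.one_sub_of_le {P Q : Matrix ι ι K} (hP : IsMonotoneMatrix (1 - P))
    (hQ : ∀ i j, 0 ≤ Q i j) (hQP : ∀ i j, Q i j ≤ P i j) : IsMonotoneMatrix (1 - Q) := by
  rw [isMonotoneMatrix_one_sub_iff] at hP ⊢
  intro x hx
  suffices h : P *ᵥ (x ⊓ 0) ≤ x ⊓ 0 from (hP _ h).trans inf_le_left
  calc P *ᵥ (x ⊓ 0) ≤ Q *ᵥ (x ⊓ 0) := fun i =>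
        sum_le_sum fun j _ => mul_le_mul_of_nonpos_right (hQP i j) inf_le_right
    _ ≤ Q *ᵥ x ⊓ Q *ᵥ 0 :=
        le_inf (mulVec_mono_right hQ inf_le_left) (mulVec_mono_right hQ inf_le_right)
    _ ≤ x ⊓ 0 := inf_le_inf hx (mulVec_zero Q).le

end MonotoneMatrix

section Substochastic

variable {ι K : Type*} [Fintype ι] [Field K] [LinearOrder K] [IsStrictOrderedRing K]
  {P : Matrix ι ι K}

lemma sum_row_eq_one_and_eq_of_mulVec_le_of_min_neg (hP : ∀ i j, 0 ≤ P i j)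
    (hsum : ∀ i, ∑ j, P i j ≤ 1) {x : ι → K} (hx : P *ᵥ x ≤ x) {i : ι} (hmin : ∀ j, x i ≤ x j)
    (hneg : x i < 0) : ∑ j, P i j = 1 ∧ ∀ j, 0 < P i j → x j = x i := by
  have hterm : ∀ j ∈ univ, 0 ≤ P i j * (x j - x i) := fun j _ =>
    mul_nonneg (hP i j) (sub_nonneg.2 (hmin j))
  have hdeficit : 0 ≤ (1 - ∑ j, P i j) * -x i :=
    mul_nonneg (sub_nonneg.2 (hsum i)) (neg_nonneg.2 hneg.le)
  have hsplit : ∑ j, P i j * (x j - x i) + (1 - ∑ j, P i j) * -x i = (P *ᵥ x) i - x i := by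
    simp only [mulVec, dotProduct, mul_sub, sum_sub_distrib, ← sum_mul]
    ring
  have hterms_zero : ∑ j, P i j * (x j - x i) = 0 := by
    linarith [hx i, sum_nonneg hterm]
  have hdeficit_zero : (1 - ∑ j, P i j) * -x i = 0 := by
    linarith [hx i, sum_nonneg hterm]
  constructor
  · have := (mul_eq_zero.1 hdeficit_zero).resolve_right (neg_ne_zero.2 hneg.ne)
    exact (sub_eq_zero.1 this).symm
  · intro j hj
    have := (sum_eq_zero_iff_of_nonneg hterm).1 hterms_zero j (mem_univ j)
    exact sub_eq_zero.1 ((mul_eq_zero.1 this).resolve_left hj.ne')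

variable [DecidableEq ι]

theorem isMonotoneMatrix_one_sub_of_substochastic (hP : ∀ i j, 0 ≤ P i j)
    (hsum : ∀ i, ∑ j, P i j ≤ 1)
    (hreach : ∀ i, ∃ j, Relation.ReflTransGen (fun k l => 0 < P k l) i j ∧ ∑ l, P j l < 1) :
    IsMonotoneMatrix (1 - P) := by
  rw [isMonotoneMatrix_one_sub_iff]
  intro x hx
  by_contra hneg
  obtain ⟨i, hi⟩ : ∃ i, x i < 0 := by simpa [Pi.le_def] using hneg
  obtain ⟨m, -, hm⟩ := exists_min_image univ x ⟨i, mem_univ i⟩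
  have hmin_principle : ∀ k, x k = x m → ∑ l, P k l = 1 ∧ ∀ l, 0 < P k l → x l = x k :=
    fun k hk => sum_row_eq_one_and_eq_of_mulVec_le_of_min_neg hP hsum hx
      (fun l => hk.trans_le (hm l (mem_univ l))) (hk.trans_lt ((hm i (mem_univ i)).trans_lt hi))
  obtain ⟨j, hmj, hj⟩ := hreach m
  have hxj : x j = x m := by
    clear hj
    induction hmj with
    | refl => rfl
    | tail _ hkl ih => exact ((hmin_principle _ ih).2 _ hkl).trans ih
  exact hj.ne (hmin_principle j hxj).1

lemma reflTransGen_of_pow_apply_pos (hP : ∀ i j, 0 ≤ P i j) {k : ℕ} {i j : ι}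
    (h : 0 < (P ^ k) i j) : Relation.ReflTransGen (fun i j => 0 < P i j) i j := by
  let := toQuiver P
  obtain ⟨⟨p, -⟩⟩ := (pow_apply_pos_iff_nonempty_path hP k i j).1 h
  clear h
  induction p with
  | nil => exact .refl
  | cons _ e ih => exact .tail ih e.down

end Substochastic

section DampedPotential

variable {ι K : Type*} [Fintype ι] [DecidableEq ι] [Field K]

/-- The solution `u` of `u = r + w ⊙ A u`: the potential of the source `r` for the kernel `A`
damped by the factor `w i` at each site `i`. It is meaningful only if `1 - diagonal w * A` is
invertible. -/
noncomputable def dampedPotential (A : Matrix ι ι K) (r w : ι → K) : ι → K :=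
  (1 - diagonal w * A)⁻¹ *ᵥ r

lemma one_sub_diagonal_mul_mulVec_apply (A : Matrix ι ι K) (w x : ι → K) (i : ι) :
    ((1 - diagonal w * A) *ᵥ x) i = x i - w i * (A *ᵥ x) i := by
  rw [sub_mulVec, one_mulVec, ← mulVec_mulVec, Pi.sub_apply, mulVec_diagonal]

variable [LinearOrder K] [IsStrictOrderedRing K] {A : Matrix ι ι K} {r w w₁ w₂ : ι → K}

lemma IsMonotoneMatrix.one_sub_diagonal_mul (hmon : IsMonotoneMatrix (1 - A))
    (hA : ∀ i j, 0 ≤ A i j) (hw : w ∈ Set.Icc 0 1) : IsMonotoneMatrix (1 - diagonal w * A) := by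
  refine hmon.one_sub_of_le (fun i j => ?_) fun i j => ?_ <;> rw [diagonal_mul]
  · exact mul_nonneg (hw.1 i) (hA i j)
  · exact mul_le_of_le_one_left (hA i j) (hw.2 i)

lemma mulVec_dampedPotential (hmon : IsMonotoneMatrix (1 - A)) (hA : ∀ i j, 0 ≤ A i j)
    (hw : w ∈ Set.Icc 0 1) : (1 - diagonal w * A) *ᵥ dampedPotential A r w = r := by
  rw [dampedPotential, mulVec_mulVec,
    mul_nonsing_inv _ (hmon.one_sub_diagonal_mul hA hw).isUnit_det, one_mulVec]

lemma dampedPotential_apply (hmon : IsMonotoneMatrix (1 - A)) (hA : ∀ i j, 0 ≤ A i j)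
    (hw : w ∈ Set.Icc 0 1) (i : ι) :
    dampedPotential A r w i = r i + w i * (A *ᵥ dampedPotential A r w) i := by
  have h := congrFun (mulVec_dampedPotential (r := r) hmon hA hw) i
  rw [one_sub_diagonal_mul_mulVec_apply] at h
  exact sub_eq_iff_eq_add.1 h

lemma dampedPotential_nonneg (hmon : IsMonotoneMatrix (1 - A)) (hA : ∀ i j, 0 ≤ A i j)
    (hr : 0 ≤ r) (hw : w ∈ Set.Icc 0 1) : 0 ≤ dampedPotential A r w :=
  hmon.one_sub_diagonal_mul hA hw _ <| by rwa [mulVec_dampedPotential hmon hA hw]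

theorem dampedPotential_mono (hmon : IsMonotoneMatrix (1 - A)) (hA : ∀ i j, 0 ≤ A i j)
    (hr : 0 ≤ r) (hw₁ : w₁ ∈ Set.Icc 0 1) (hw₂ : w₂ ∈ Set.Icc 0 1) (hle : w₁ ≤ w₂) :
    dampedPotential A r w₁ ≤ dampedPotential A r w₂ := by
  refine (hmon.one_sub_diagonal_mul hA hw₂).le_of_mulVec_le ?_
  rw [mulVec_dampedPotential hmon hA hw₂]
  intro i
  have hAu : 0 ≤ (A *ᵥ dampedPotential A r w₁) i :=
    dotProduct_nonneg_of_nonneg (hA i) (dampedPotential_nonneg hmon hA hr hw₁)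
  rw [one_sub_diagonal_mul_mulVec_apply, sub_le_iff_le_add, dampedPotential_apply hmon hA hw₁]
  gcongr
  exact hle i

theorem dampedPotential_supermodular (hmon : IsMonotoneMatrix (1 - A)) (hA : ∀ i j, 0 ≤ A i j)
    (hr : 0 ≤ r) (hw₁ : w₁ ∈ Set.Icc 0 1) (hw₂ : w₂ ∈ Set.Icc 0 1) :
    dampedPotential A r w₁ + dampedPotential A r w₂ ≤
      dampedPotential A r (w₁ ⊔ w₂) + dampedPotential A r (w₁ ⊓ w₂) := by
  have hsup : w₁ ⊔ w₂ ∈ Set.Icc 0 1 := ⟨le_sup_of_le_left hw₁.1, sup_le hw₁.2 hw₂.2⟩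
  have hinf : w₁ ⊓ w₂ ∈ Set.Icc 0 1 := ⟨le_inf hw₁.1 hw₂.1, inf_le_of_left_le hw₁.2⟩
  refine (hmon.one_sub_diagonal_mul hA hw₁).le_of_mulVec_le fun i => ?_
  have hAinf := mulVec_mono_right hA (dampedPotential_mono hmon hA hr hinf hw₂ inf_le_right) i
  have hAsup := mulVec_mono_right hA (dampedPotential_mono hmon hA hr hw₂ hsup le_sup_right) i
  have eq₂ := dampedPotential_apply (r := r) hmon hA hw₂ i
  have eq_sup := dampedPotential_apply (r := r) hmon hA hsup i
  have eq_inf := dampedPotential_apply (r := r) hmon hA hinf i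
  rw [mulVec_add, mulVec_add, mulVec_dampedPotential hmon hA hw₁]
  simp only [Pi.add_apply, one_sub_diagonal_mul_mulVec_apply]
  rw [Pi.sup_apply] at eq_sup
  rw [Pi.inf_apply] at eq_inf
  rcases le_total (w₁ i) (w₂ i) with hle | hle
  · rw [sup_eq_right.2 hle] at eq_sup
    rw [inf_eq_left.2 hle] at eq_inf
    linarith [mul_le_mul_of_nonneg_left hAsup (sub_nonneg.2 hle)]
  · rw [sup_eq_left.2 hle] at eq_sup
    rw [inf_eq_right.2 hle] at eq_inf
    linarith [mul_le_mul_of_nonneg_left hAinf (sub_nonneg.2 hle)]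

end DampedPotential

section LinkDamping

variable {ι K : Type*} [DecidableEq ι] [Ring K]

/-- The diagonal of `I - ω Σ_{j ∈ S} e_j e_jᵀ`: the weight an agent keeps for its neighbours once
the influencer is linked to the agents in `S`. -/
def linkDamping (ω : K) (S : Finset ι) (i : ι) : K :=
  1 - if i ∈ S then ω else 0

variable [LinearOrder K] [IsOrderedRing K] {ω : K}

lemma linkDamping_mem_Icc (hω : ω ∈ Set.Icc 0 1) (S : Finset ι) :
    linkDamping ω S ∈ Set.Icc 0 1 := by
  constructor <;> intro i <;> by_cases hi : i ∈ S <;> simp [linkDamping, hi, hω.1, hω.2]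

lemma linkDamping_union (hω : 0 ≤ ω) (S T : Finset ι) :
    linkDamping ω (S ∪ T) = linkDamping ω S ⊓ linkDamping ω T := by
  ext i
  by_cases hS : i ∈ S <;> by_cases hT : i ∈ T <;> simp [linkDamping, hS, hT, hω]

lemma linkDamping_inter (hω : 0 ≤ ω) (S T : Finset ι) :
    linkDamping ω (S ∩ T) = linkDamping ω S ⊔ linkDamping ω T := by
  ext i
  by_cases hS : i ∈ S <;> by_cases hT : i ∈ T <;> simp [linkDamping, hS, hT, hω]

end LinkDamping

section SusceptibleWeights

variable {ι K : Type*} [Fintype ι] [DecidableEq ι] [Field K]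

/-- The matrix `(I - Θ) W`: the weight agents give to each other once the share `θ i` that agent `i`
gives to its own initial opinion is taken off. -/
def susceptibleWeights (W : Matrix ι ι K) (θ : ι → K) : Matrix ι ι K :=
  (1 - diagonal θ) * W

lemma susceptibleWeights_apply (W : Matrix ι ι K) (θ : ι → K) (i j : ι) :
    susceptibleWeights W θ i j = (1 - θ i) * W i j := by
  rw [susceptibleWeights, ← diagonal_one, diagonal_sub, diagonal_mul]

variable {W : Matrix ι ι K}

lemma sum_susceptibleWeights (hW1 : ∀ i, ∑ j, W i j = 1) (θ : ι → K) (i : ι) :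
    ∑ j, susceptibleWeights W θ i j = 1 - θ i := by
  simp only [susceptibleWeights_apply, ← mul_sum, hW1, mul_one]

variable [LinearOrder K] {θ : ι → K}

-- An edge of `W` is lost in `(I - Θ) W` only if it leaves a fully stubborn agent, and the path may
-- as well stop there.
lemma exists_reflTransGen_susceptibleWeights (hθ : ∀ i, 0 ≤ θ i) {i j : ι}
    (hij : Relation.ReflTransGen (fun k l => 0 < W k l) i j) (hj : 0 < θ j) :
    ∃ j', Relation.ReflTransGen (fun k l => 0 < susceptibleWeights W θ k l) i j' ∧ 0 < θ j' := by
  induction hij using Relation.ReflTransGen.head_induction_on with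
  | refl => exact ⟨j, .refl, hj⟩
  | @head k l hkl _ ih =>
    obtain ⟨j', hlj', hj'⟩ := ih
    rcases (hθ k).eq_or_lt with hk | hk
    · refine ⟨j', .head ?_ hlj', hj'⟩
      rwa [susceptibleWeights_apply, ← hk, sub_zero, one_mul]
    · exact ⟨k, .refl, hk⟩

variable [IsStrictOrderedRing K]

lemma susceptibleWeights_nonneg (hW0 : ∀ i j, 0 ≤ W i j) (hθ : ∀ i, θ i ≤ 1) (i j : ι) :
    0 ≤ susceptibleWeights W θ i j := by
  rw [susceptibleWeights_apply]
  exact mul_nonneg (sub_nonneg.2 (hθ i)) (hW0 i j)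

theorem isMonotoneMatrix_one_sub_susceptibleWeights (hW0 : ∀ i j, 0 ≤ W i j)
    (hW1 : ∀ i, ∑ j, W i j = 1) (hθ : ∀ i, θ i ∈ Set.Icc (0 : K) 1)
    (hreach : ∀ i, ∃ j, 0 < θ j ∧ ∃ k, 0 < (W ^ k) i j) :
    IsMonotoneMatrix (1 - susceptibleWeights W θ) := by
  refine isMonotoneMatrix_one_sub_of_substochastic
    (susceptibleWeights_nonneg hW0 fun i => (hθ i).2) (fun i => ?_) fun i => ?_
  · rw [sum_susceptibleWeights hW1]
    exact sub_le_self 1 (hθ i).1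
  · obtain ⟨j, hj, k, hk⟩ := hreach i
    obtain ⟨j', hij', hj'⟩ := exists_reflTransGen_susceptibleWeights (fun i => (hθ i).1)
      (reflTransGen_of_pow_apply_pos hW0 hk) hj
    refine ⟨j', hij', ?_⟩
    rw [sum_susceptibleWeights hW1]
    exact sub_lt_self 1 hj'

end SusceptibleWeights

section SocialPower

variable {n : ℕ} {W : Matrix (Fin n) (Fin n) ℝ} {θ : Fin n → ℝ} {ω : ℝ}

lemma Hmat_eq_diagonal_mul (W : Matrix (Fin n) (Fin n) ℝ) (θ : Fin n → ℝ) (ω : ℝ)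
    (S : Finset (Fin n)) :
    Hmat W θ ω S = diagonal (linkDamping ω S) * susceptibleWeights W θ := by
  rw [Hmat, ← diagonal_one, diagonal_sub]
  rfl

lemma p0vec_eq_one_sub_dampedPotential (hW1 : ∀ i, ∑ j, W i j = 1) {S : Finset (Fin n)}
    (hdet : IsUnit (1 - Hmat W θ ω S).det) :
    p0vec W θ ω S = 1 - dampedPotential (susceptibleWeights W θ) θ (linkDamping ω S) := by
  have hsource : (1 - diagonal θ) *ᵥ (fun j => if j ∈ S then ω else 0) =
      (1 - Hmat W θ ω S) *ᵥ 1 - θ := by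
    ext i
    have hrow : (susceptibleWeights W θ *ᵥ 1) i = 1 - θ i := by
      rw [mulVec, dotProduct_one, sum_susceptibleWeights hW1]
    rw [Hmat_eq_diagonal_mul, Pi.sub_apply, one_sub_diagonal_mul_mulVec_apply, hrow,
      sub_mulVec, one_mulVec, Pi.sub_apply, mulVec_diagonal, linkDamping, Pi.one_apply]
    ring
  rw [p0vec, ← mulVec_mulVec, hsource, mulVec_sub, mulVec_mulVec, nonsing_inv_mul _ hdet,
    one_mulVec, dampedPotential, Hmat_eq_diagonal_mul]

theorem p0vec_submodular (hW0 : ∀ i j, 0 ≤ W i j) (hW1 : ∀ i, ∑ j, W i j = 1)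
    (hθ : ∀ i, θ i ∈ Set.Icc (0 : ℝ) 1) (hreach : ∀ i, ∃ j, 0 < θ j ∧ ∃ k, 0 < (W ^ k) i j)
    (hω : ω ∈ Set.Icc (0 : ℝ) 1) (S T : Finset (Fin n)) :
    p0vec W θ ω (S ∪ T) + p0vec W θ ω (S ∩ T) ≤ p0vec W θ ω S + p0vec W θ ω T := by
  have hA := susceptibleWeights_nonneg hW0 fun i => (hθ i).2
  have hmon := isMonotoneMatrix_one_sub_susceptibleWeights hW0 hW1 hθ hreach
  have hp0 : ∀ R : Finset (Fin n), p0vec W θ ω R =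
      1 - dampedPotential (susceptibleWeights W θ) θ (linkDamping ω R) := fun R =>
    p0vec_eq_one_sub_dampedPotential hW1 <| Hmat_eq_diagonal_mul W θ ω R ▸
      (hmon.one_sub_diagonal_mul hA (linkDamping_mem_Icc hω R)).isUnit_det
  have hsuper := dampedPotential_supermodular hmon hA (fun i => (hθ i).1)
    (linkDamping_mem_Icc hω S) (linkDamping_mem_Icc hω T)
  rw [← linkDamping_union hω.1, ← linkDamping_inter hω.1] at hsuper
  intro i
  have hsuper_i := hsuper i
  simp only [hp0, Pi.add_apply, Pi.sub_apply] at hsuper_i ⊢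
  linarith

theorem sp0_submodular_general (hW0 : ∀ i j, 0 ≤ W i j) (hW1 : ∀ i, ∑ j, W i j = 1)
    (hθ : ∀ i, θ i ∈ Set.Icc (0 : ℝ) 1) (hreach : ∀ i, ∃ j, 0 < θ j ∧ ∃ k, 0 < (W ^ k) i j)
    (hω : ω ∈ Set.Icc (0 : ℝ) 1) (S T : Finset (Fin n)) :
    sp0 W θ ω (S ∪ T) + sp0 W θ ω (S ∩ T) ≤ sp0 W θ ω S + sp0 W θ ω T := by
  have hsum := sum_le_sum fun i (_ : i ∈ univ) => p0vec_submodular hW0 hW1 hθ hreach hω S T i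
  simp only [Pi.add_apply, sum_add_distrib] at hsum
  simp only [sp0, ← add_div]
  gcongr ?_ / _
  linarith

end SocialPower

/-- The influencer's social power is a submodular set function. -/
theorem sp0_submodular
    (n : ℕ) (hn : 1 ≤ n) (W : Matrix (Fin n) (Fin n) ℝ)
    (hW0 : ∀ i j, 0 ≤ W i j) (hW1 : ∀ i, ∑ j, W i j = 1)
    (hconn : ∀ i j : Fin n, ∃ k, 1 ≤ k ∧ 0 < (W ^ k) i j)
    (θ : Fin n → ℝ) (hθ : ∀ i, θ i ∈ Set.Icc (0 : ℝ) 1) (hθpos : ∃ j, 0 < θ j)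
    (ω : ℝ) (hω : ω ∈ Set.Ioo (0 : ℝ) 1)
    (T S : Finset (Fin n)) (hTS : T ⊆ S) (i : Fin n) (hiS : i ∉ S) :
    sp0 W θ ω (insert i S) - sp0 W θ ω S ≤ sp0 W θ ω (insert i T) - sp0 W θ ω T := by
  obtain ⟨j, hj⟩ := hθpos
  have h := sp0_submodular_general hW0 hW1 hθ
    (fun k => ⟨j, hj, (hconn k j).imp fun _ => And.right⟩) (Set.Ioo_subset_Icc_self hω)
    S (insert i T)
  rw [union_insert, union_eq_left.2 hTS, inter_insert_of_notMem hiS, inter_eq_right.2 hTS] at h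
  linarith
end

section
/- Suppose W = 𝟙 cᵀ with c_j > 0 for all j and Σ_j c_j = 1, homogeneous stubbornness θ_i = θ for all i with θ ∈ (0,1), and ω ∈ (0,1). Fix 1 ≤ K ≤ n and let S₁ ⊆ V be any K-element set consisting of indices of the K largest entries of c, i.e., c_i ≥ c_j for every i ∈ S₁ and j ∉ S₁. Then S₁ maximizes the influencer's social power under the budget K: sp₀(S₁) ≥ sp₀(S) for every S ⊆ V with |S| ≤ K. -/
open Matrix Finset

/-- The rank-one matrix `𝟙 cᵀ`. -/
def rankOne {n : ℕ} (c : Fin n → ℝ) : Matrix (Fin n) (Fin n) ℝ :=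
  Matrix.of fun _ j => c j

/-!
For `W = 𝟙 cᵀ` the matrix `H(S)` has rank one, so the Sherman–Morrison formula gives `p₀(S)`
explicitly. When all agents are equally stubborn, `𝟙ᵀ p₀(S)` depends on `S` only through its size
and its total centrality `∑ j ∈ S, c j`, and it is nondecreasing in each of the two. A set of `K`
indices with the largest centralities maximizes both at once among the sets of size at most `K`.
-/

section TopSet

variable {ι M : Type*} [AddCommMonoid M] [LinearOrder M] [IsOrderedCancelAddMonoid M]

theorem sum_le_sum_of_card_le_of_forall_notMem_le {f : ι → M} {s t : Finset ι}
    (hcard : #s ≤ #t) (hf : ∀ i ∈ t, 0 ≤ f i) (htop : ∀ i ∈ t, ∀ j ∉ t, f j ≤ f i) :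
    ∑ i ∈ s, f i ≤ ∑ i ∈ t, f i := by
  classical
  obtain rfl | ht := t.eq_empty_or_nonempty
  · rw [card_empty, Nat.le_zero, card_eq_zero] at hcard
    rw [hcard]
  obtain ⟨m, hm, hmin⟩ := t.exists_min_image f ht
  rw [← sum_sdiff_le_sum_sdiff]
  calc ∑ i ∈ s \ t, f i
      ≤ #(s \ t) • f m :=
        sum_le_card_nsmul _ _ _ fun j hj => htop m hm j (mem_sdiff.1 hj).2
    _ ≤ #(t \ s) • f m := nsmul_le_nsmul_left (hf m hm) (card_sdiff_le_card_sdiff_iff.2 hcard)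
    _ ≤ ∑ i ∈ t \ s, f i :=
        card_nsmul_le_sum _ _ _ fun j hj => hmin j (mem_sdiff.1 hj).1

end TopSet

section ShermanMorrison

variable {ι 𝕜 : Type*} [Fintype ι] [DecidableEq ι] [Field 𝕜]

theorem inv_one_sub_vecMulVec {u v : ι → 𝕜} (huv : v ⬝ᵥ u ≠ 1) :
    (1 - vecMulVec u v)⁻¹ = 1 + (1 - v ⬝ᵥ u)⁻¹ • vecMulVec u v := by
  have hden : 1 - v ⬝ᵥ u ≠ 0 := sub_ne_zero.2 huv.symm
  have hsq : vecMulVec u v * vecMulVec u v = (v ⬝ᵥ u) • vecMulVec u v := by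
    rw [vecMulVec_mul_vecMulVec, vecMulVec_smul]
  refine inv_eq_right_inv ?_
  rw [sub_mul, one_mul, mul_add, mul_one, mul_smul_comm, hsq]
  match_scalars <;> field_simp
  ring

theorem inv_one_sub_vecMulVec_mulVec {u v : ι → 𝕜} (huv : v ⬝ᵥ u ≠ 1) (b : ι → 𝕜) :
    (1 - vecMulVec u v)⁻¹ *ᵥ b = b + (v ⬝ᵥ b / (1 - v ⬝ᵥ u)) • u := by
  rw [inv_one_sub_vecMulVec huv, add_mulVec, one_mulVec, smul_mulVec, vecMulVec_mulVec,
    op_smul_eq_smul, smul_smul, inv_mul_eq_div]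

end ShermanMorrison

section RankOne

variable {n : ℕ} {c : Fin n → ℝ} {ω : ℝ} {S : Finset (Fin n)}

/-- The vector `ω ∑_{j ∈ S} e_j` of weights that the agents put on the influencer when the
influencer targets `S`. -/
noncomputable def linkWeight (ω : ℝ) (S : Finset (Fin n)) : Fin n → ℝ :=
  fun i => if i ∈ S then ω else 0

theorem sum_linkWeight : ∑ i, linkWeight ω S i = ω * #S := by
  simp [linkWeight, mul_comm]

theorem dotProduct_linkWeight : c ⬝ᵥ linkWeight ω S = ω * ∑ j ∈ S, c j := by
  simp [linkWeight, dotProduct, mul_sum, mul_comm]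

theorem Hmat_rankOne (θ : Fin n → ℝ) :
    Hmat (rankOne c) θ ω S = vecMulVec ((1 - θ) * (1 - linkWeight ω S)) c := by
  ext i j
  simp only [Hmat, rankOne, linkWeight, sub_mul, one_mul, Matrix.sub_apply, diagonal_mul,
    of_apply, vecMulVec_apply, Pi.mul_apply, Pi.sub_apply, Pi.one_apply]
  ring

theorem p0vec_rankOne {θ : Fin n → ℝ} (hθ : c ⬝ᵥ ((1 - θ) * (1 - linkWeight ω S)) ≠ 1) :
    p0vec (rankOne c) θ ω S = (1 - θ) * linkWeight ω S +
      (c ⬝ᵥ ((1 - θ) * linkWeight ω S) / (1 - c ⬝ᵥ ((1 - θ) * (1 - linkWeight ω S)))) •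
        ((1 - θ) * (1 - linkWeight ω S)) := by
  have hb : (1 - diagonal θ) *ᵥ linkWeight ω S = (1 - θ) * linkWeight ω S := by
    ext i
    simp [sub_mulVec, mulVec_diagonal, sub_mul]
  change ((1 - Hmat (rankOne c) θ ω S)⁻¹ * (1 - diagonal θ)) *ᵥ linkWeight ω S = _
  rw [← mulVec_mulVec, hb, Hmat_rankOne, inv_one_sub_vecMulVec_mulVec hθ]

end RankOne

section AggregateInfluence

variable {a m s t : ℝ}

/-- The aggregate influence `cᵀ p₀(S)` for the weights `𝟙 cᵀ` and homogeneous stubbornness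
`1 - a`, as a function of the total centrality `m = ∑ j, c j` and the targeted centrality
`s = ω ∑ j ∈ S, c j`. It is the solution `x` of `x = a * (s + (m - s) * x)`, provided
`a * (m - s) ≠ 1`. -/
noncomputable def aggregateInfluence (a m s : ℝ) : ℝ :=
  a * s / (1 - a * (m - s))

theorem one_sub_mul_sub_pos (ha : 0 ≤ a) (ham : a * m < 1) (hs : 0 ≤ s) :
    0 < 1 - a * (m - s) := by
  linarith [mul_nonneg ha hs, mul_sub a m s]

theorem aggregateInfluence_le_one (ha : 0 ≤ a) (ham : a * m < 1) (hs : 0 ≤ s) :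
    aggregateInfluence a m s ≤ 1 := by
  rw [aggregateInfluence, div_le_one (one_sub_mul_sub_pos ha ham hs)]
  linarith

theorem aggregateInfluence_le_aggregateInfluence (ha : 0 ≤ a) (ham : a * m < 1) (hs : 0 ≤ s)
    (hst : s ≤ t) : aggregateInfluence a m s ≤ aggregateInfluence a m t := by
  rw [aggregateInfluence, aggregateInfluence, div_le_div_iff₀ (one_sub_mul_sub_pos ha ham hs)
    (one_sub_mul_sub_pos ha ham (hs.trans hst))]
  have hdiff : 0 ≤ a * (t - s) * (1 - a * m) :=
    mul_nonneg (mul_nonneg ha (sub_nonneg.2 hst)) (sub_nonneg.2 ham.le)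
  linarith

theorem add_mul_sub_le_add_mul_sub {x y k l N : ℝ} (hx : x ≤ 1) (hxy : x ≤ y) (hkl : k ≤ l)
    (hlN : l ≤ N) : k + x * (N - k) ≤ l + y * (N - l) :=
  calc k + x * (N - k)
      = x * N + (1 - x) * k := by ring
    _ ≤ x * N + (1 - x) * l := by gcongr
    _ = l + x * (N - l) := by ring
    _ ≤ l + y * (N - l) := by gcongr

end AggregateInfluence

section Homogeneous

variable {n : ℕ} {c : Fin n → ℝ} {θ ω : ℝ} {S T : Finset (Fin n)}

theorem sum_p0vec_rankOne_const (hden : (1 - θ) * (∑ j, c j - ω * ∑ j ∈ S, c j) ≠ 1) :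
    ∑ i, p0vec (rankOne c) (fun _ => θ) ω S i =
      (1 - θ) * (ω * #S +
        aggregateInfluence (1 - θ) (∑ j, c j) (ω * ∑ j ∈ S, c j) * (n - ω * #S)) := by
  have hconst (v : Fin n → ℝ) : (1 - fun _ => θ) * v = (1 - θ) • v := rfl
  have hdot : c ⬝ᵥ ((1 - θ) • (1 - linkWeight ω S)) =
      (1 - θ) * (∑ j, c j - ω * ∑ j ∈ S, c j) := by
    rw [dotProduct_smul, dotProduct_sub, dotProduct_one, dotProduct_linkWeight, smul_eq_mul]
  rw [p0vec_rankOne (by rwa [hconst, hdot]), hconst, hconst, hdot, dotProduct_smul,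
    dotProduct_linkWeight, smul_eq_mul, ← aggregateInfluence]
  simp only [Pi.add_apply, Pi.smul_apply, Pi.sub_apply, Pi.one_apply, smul_eq_mul,
    sum_add_distrib, ← mul_sum, sum_sub_distrib, sum_linkWeight, sum_const, card_univ,
    Fintype.card_fin, nsmul_eq_mul, mul_one]
  ring

theorem sp0_rankOne_const_le_sp0_rankOne_const (hc : ∀ j, 0 ≤ c j) (hθ : θ ≤ 1)
    (hθc : (1 - θ) * ∑ j, c j < 1) (hω : ω ∈ Set.Icc (0 : ℝ) 1) (hcard : #S ≤ #T)
    (hsum : ∑ j ∈ S, c j ≤ ∑ j ∈ T, c j) :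
    sp0 (rankOne c) (fun _ => θ) ω S ≤ sp0 (rankOne c) (fun _ => θ) ω T := by
  have ha : 0 ≤ 1 - θ := sub_nonneg.2 hθ
  have hpos (R : Finset (Fin n)) : 0 ≤ ω * ∑ j ∈ R, c j :=
    mul_nonneg hω.1 (sum_nonneg fun j _ => hc j)
  have hden (R : Finset (Fin n)) : (1 - θ) * (∑ j, c j - ω * ∑ j ∈ R, c j) ≠ 1 :=
    (sub_pos.1 (one_sub_mul_sub_pos ha hθc (hpos R))).ne
  rw [sp0, sp0, sum_p0vec_rankOne_const (hden S), sum_p0vec_rankOne_const (hden T)]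
  have hωcard : ω * #S ≤ ω * #T := mul_le_mul_of_nonneg_left (mod_cast hcard) hω.1
  have hωn : ω * #T ≤ n :=
    (mul_le_of_le_one_left (Nat.cast_nonneg _) hω.2).trans (mod_cast card_finset_fin_le T)
  have hωsum : ω * ∑ j ∈ S, c j ≤ ω * ∑ j ∈ T, c j := mul_le_mul_of_nonneg_left hsum hω.1
  gcongr ((1 - θ) * ?_ + 1) / _
  exact add_mul_sub_le_add_mul_sub (aggregateInfluence_le_one ha hθc (hpos S))
    (aggregateInfluence_le_aggregateInfluence ha hθc (hpos S) hωsum) hωcard hωn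

theorem rank_one_homogeneous_stubbornness_optimal_general (hc : ∀ j, 0 ≤ c j) (hθ : θ ≤ 1)
    (hθc : (1 - θ) * ∑ j, c j < 1) (hω : ω ∈ Set.Icc (0 : ℝ) 1)
    (htop : ∀ i ∈ T, ∀ j ∉ T, c j ≤ c i) (hcard : #S ≤ #T) :
    sp0 (rankOne c) (fun _ => θ) ω S ≤ sp0 (rankOne c) (fun _ => θ) ω T :=
  sp0_rankOne_const_le_sp0_rankOne_const hc hθ hθc hω hcard <|
    sum_le_sum_of_card_le_of_forall_notMem_le hcard (fun j _ => hc j) htop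

end Homogeneous

/-- Rank-one weights, homogeneous stubbornness: picking the `K` largest centralities
maximizes the influencer's social power. -/
theorem rank_one_homogeneous_stubbornness_optimal
    (n : ℕ) (hn : 1 ≤ n) (c : Fin n → ℝ) (hc : ∀ j, 0 < c j) (hc1 : ∑ j, c j = 1)
    (θ : ℝ) (hθ : θ ∈ Set.Ioo (0 : ℝ) 1) (ω : ℝ) (hω : ω ∈ Set.Ioo (0 : ℝ) 1)
    (K : ℕ) (hK : 1 ≤ K) (hKn : K ≤ n)
    (S₁ : Finset (Fin n)) (hcard : S₁.card = K)
    (htop : ∀ i ∈ S₁, ∀ j ∉ S₁, c j ≤ c i) :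
    ∀ S : Finset (Fin n), S.card ≤ K →
      sp0 (rankOne c) (fun _ => θ) ω S ≤ sp0 (rankOne c) (fun _ => θ) ω S₁ := fun _ hS =>
  rank_one_homogeneous_stubbornness_optimal_general (fun j => (hc j).le) hθ.2.le
    (by rw [hc1, mul_one]; exact sub_lt_self 1 hθ.1) (Set.Ioo_subset_Icc_self hω) htop
    (hS.trans_eq hcard.symm)
end

section
/- Let n = 2s − 1 with s ≥ 2, and let W = C(w₀, w₁, …, w_{s−1}, w_{s−1}, …, w₁) be the symmetric circulant weight matrix of a ring graph, where w₀ ≥ w₁ ≥ … ≥ w_{s−1} ≥ 0, w₀ > 0, w₁ > w_{s−1}, and w₀ + 2 Σ_{ℓ=1}^{s−1} w_ℓ = 1. Assume homogeneous stubbornness θ_i = θ ∈ (0,1) for all i ∈ V and ω ∈ (0,1). Let M = I − (1 − θ) W, so M is invertible and M^{-1} = C(m₀, m₁, …, m_{n−1}) is a symmetric circulant matrix. Then m₀ > m₁ > … > m_{s−1}, and consequently {1, s} maximizes the influencer's social power under budget K = 2: sp₀({1, s}) ≥ sp₀(S) for every S ⊆ V with |S| ≤ 2, with sp₀({1, s+1})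 = sp₀({1, s}). -/
open Matrix Finset

/-- The circulant matrix `C(m₀,…,m_{n-1})` whose `(i,j)` entry is `m_{(j-i) mod n}`. -/
def Cmat {n : ℕ} (m : Fin n → ℝ) : Matrix (Fin n) (Fin n) ℝ :=
  Matrix.of fun i j => m (j - i)

/-- `M = I - (1-θ) W` for a circulant weight generator `w`. -/
noncomputable def Mring (n : ℕ) (θ : ℝ) (w : Fin n → ℝ) : Matrix (Fin n) (Fin n) ℝ :=
  1 - (1 - θ) • Cmat w

/-- Generator of the symmetric circulant matrix `C(w₀,…,w_{s-1},…)` of a ring graph: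
the entry at circular position `k` is `w_{min(k, n-k)}`. -/
def ringGen (n : ℕ) (w : ℕ → ℝ) : Fin n → ℝ :=
  fun k => w (min k.val (n - k.val))

/-!
A pair `{i, j}` receives influence through the `{i, j}`-block of `M⁻¹`, whose row sums are both
`m₀ + m_{j-i}`; solving the equation for `p₀` shows that its social power is a decreasing function
of the overlap `m_{j-i}`, so everything reduces to the strict decrease `m₀ > m₁ > … > m_{s-1}`.

Put `r = s - 1`. The gaps `g_k = m_k - m_{k+1}` are odd under the reflection `k ↦ -1 - k` of
`ℤ/(2r+1)`. Folding the equation `m = e₀ + (1 - θ) W m` along this reflection gives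
`g = e₀ + (1 - θ) Q g` on the half `{0, …, r-1}`, where `Q` is the weight of `k → j` minus that of
`k → -1 - j`. Since `j` is closer to `k` than its mirror image is, monotone weights make `Q`
nonnegative, and its row sums are at most one. The minimum principle for the substochastic matrix
`(1 - θ) Q` yields `g ≥ 0`, and a drop `w_{d+1} < w_d` with `d ≥ 1` makes `Q` connected enough to
propagate `g₀ ≥ 1 > 0` to all of the half.
-/


section MinimumPrinciple

variable {ι R : Type*} [Fintype ι] [Field R] [LinearOrder R] [IsStrictOrderedRing R]
  {Q : Matrix ι ι R} {x : ι → R}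

lemma nonneg_of_mulVec_le (hQ : ∀ i j, 0 ≤ Q i j) (hrow : ∀ i, ∑ j, Q i j < 1)
    (hx : Q *ᵥ x ≤ x) : 0 ≤ x := by
  intro i
  obtain ⟨k, -, hk⟩ := exists_min_image univ x ⟨i, mem_univ i⟩
  refine le_trans ?_ (hk i (mem_univ i))
  by_contra! hneg
  have hlt : x k < x k := calc
    x k = 1 * x k := (one_mul _).symm
    _ < (∑ j, Q k j) * x k := mul_lt_mul_of_neg_right (hrow k) hneg
    _ = ∑ j, Q k j * x k := sum_mul ..
    _ ≤ ∑ j, Q k j * x j :=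
      sum_le_sum fun j hj => mul_le_mul_of_nonneg_left (hk j hj) (hQ k j)
    _ ≤ x k := hx k
  exact hlt.false

lemma pos_of_mulVec_le (hQ : ∀ i j, 0 ≤ Q i j) (hx₀ : 0 ≤ x) (hx : Q *ᵥ x ≤ x) {i j : ι}
    (hij : 0 < Q i j) (hj : 0 < x j) : 0 < x i := calc
  0 < Q i j * x j := mul_pos hij hj
  _ ≤ ∑ k, Q i k * x k :=
    single_le_sum (f := fun k => Q i k * x k) (fun k _ => mul_nonneg (hQ i k) (hx₀ k)) (mem_univ j)
  _ ≤ x i := hx i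

variable [DecidableEq ι]

lemma isUnit_one_sub_of_row_sum_lt_one (hQ : ∀ i j, 0 ≤ Q i j) (hrow : ∀ i, ∑ j, Q i j < 1) :
    IsUnit (1 - Q) := by
  rw [← mulVec_injective_iff_isUnit, ← coe_mulVecLin, injective_iff_map_eq_zero]
  intro x hx
  have hfix : Q *ᵥ x = x := by
    rw [mulVecLin_apply, sub_mulVec, one_mulVec, sub_eq_zero] at hx
    exact hx.symm
  have hneg : 0 ≤ -x := nonneg_of_mulVec_le hQ hrow (by rw [mulVec_neg, hfix])
  exact le_antisymm (neg_nonneg.1 hneg) (nonneg_of_mulVec_le hQ hrow hfix.le)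

lemma inv_one_sub_apply_nonneg (hQ : ∀ i j, 0 ≤ Q i j) (hrow : ∀ i, ∑ j, Q i j < 1) (i j : ι) :
    0 ≤ (1 - Q)⁻¹ i j := by
  have hdet := (isUnit_iff_isUnit_det _).1 (isUnit_one_sub_of_row_sum_lt_one hQ hrow)
  have hcol : (1 - Q) *ᵥ (1 - Q)⁻¹.col j = Pi.single j 1 := by
    rw [← mulVec_single_one, mulVec_mulVec, mul_nonsing_inv _ hdet, one_mulVec]
  refine nonneg_of_mulVec_le hQ hrow (x := (1 - Q)⁻¹.col j) ?_ i
  rw [← sub_nonneg, ← one_mulVec ((1 - Q)⁻¹.col j), mulVec_mulVec, mul_one, ← sub_mulVec, hcol]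
  exact Pi.single_nonneg.2 zero_le_one

end MinimumPrinciple

section SocialPower

variable {n : ℕ} {W : Matrix (Fin n) (Fin n) ℝ} {S : Finset (Fin n)}

lemma Hmat_apply (W : Matrix (Fin n) (Fin n) ℝ) (θ : Fin n → ℝ) (ω : ℝ) (S : Finset (Fin n))
    (i j : Fin n) :
    Hmat W θ ω S i j = (1 - if i ∈ S then ω else 0) * ((1 - θ i) * W i j) := by
  simp only [Hmat, ← diagonal_one, diagonal_sub, diagonal_mul]

section Stochastic

variable {θ : Fin n → ℝ} {ω : ℝ}

lemma Hmat_apply_nonneg (hW : W ∈ rowStochastic ℝ (Fin n)) (hθ : ∀ i, θ i ≤ 1) (hω : ω ≤ 1)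
    (i j : Fin n) : 0 ≤ Hmat W θ ω S i j := by
  rw [Hmat_apply]
  refine mul_nonneg ?_ (mul_nonneg (sub_nonneg.2 (hθ i)) (nonneg_of_mem_rowStochastic hW))
  split_ifs <;> linarith

lemma sum_Hmat_apply_lt_one (hW : W ∈ rowStochastic ℝ (Fin n))
    (hθ : ∀ i, θ i ∈ Set.Ioc (0 : ℝ) 1) (hω : 0 ≤ ω) (i : Fin n) :
    ∑ j, Hmat W θ ω S i j < 1 := by
  simp only [Hmat_apply, ← mul_sum, sum_row_of_mem_rowStochastic hW, mul_one]
  calc (1 - if i ∈ S then ω else 0) * (1 - θ i) ≤ 1 - θ i :=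
        mul_le_of_le_one_left (sub_nonneg.2 (hθ i).2) (by split_ifs <;> linarith)
    _ < 1 := sub_lt_self 1 (hθ i).1

lemma isUnit_one_sub_Hmat (hW : W ∈ rowStochastic ℝ (Fin n))
    (hθ : ∀ i, θ i ∈ Set.Ioc (0 : ℝ) 1) (hω : ω ∈ Set.Icc (0 : ℝ) 1) :
    IsUnit (1 - Hmat W θ ω S) :=
  isUnit_one_sub_of_row_sum_lt_one (Hmat_apply_nonneg hW (fun i => (hθ i).2) hω.2)
    (sum_Hmat_apply_lt_one hW hθ hω.1)

lemma p0vec_eq_of_mulVec_eq (hW : W ∈ rowStochastic ℝ (Fin n))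
    (hθ : ∀ i, θ i ∈ Set.Ioc (0 : ℝ) 1) (hω : ω ∈ Set.Icc (0 : ℝ) 1) {x : Fin n → ℝ}
    (hx : (1 - Hmat W θ ω S) *ᵥ x = (1 - diagonal θ) *ᵥ fun j => if j ∈ S then ω else 0) :
    p0vec W θ ω S = x := by
  have hdet := (isUnit_iff_isUnit_det _).1 (isUnit_one_sub_Hmat (S := S) hW hθ hω)
  rw [p0vec, ← mulVec_mulVec, ← hx, mulVec_mulVec, nonsing_inv_mul _ hdet, one_mulVec]

end Stochastic

variable {θ ω : ℝ}

lemma Hmat_empty (W : Matrix (Fin n) (Fin n) ℝ) (θ ω : ℝ) :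
    Hmat W (fun _ => θ) ω ∅ = (1 - θ) • W := by
  ext i j
  simp [Hmat_apply]

lemma isUnit_one_sub_smul (hW : W ∈ rowStochastic ℝ (Fin n)) (hθ : θ ∈ Set.Ioc (0 : ℝ) 1) :
    IsUnit (1 - (1 - θ) • W) := by
  rw [← Hmat_empty W θ 0]
  exact isUnit_one_sub_Hmat hW (fun _ => hθ) (by simp)

lemma inv_one_sub_smul_apply_nonneg (hW : W ∈ rowStochastic ℝ (Fin n))
    (hθ : θ ∈ Set.Ioc (0 : ℝ) 1) (i j : Fin n) : 0 ≤ (1 - (1 - θ) • W)⁻¹ i j := by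
  rw [← Hmat_empty W θ 0]
  exact inv_one_sub_apply_nonneg (Hmat_apply_nonneg hW (fun _ => hθ.2) zero_le_one)
    (sum_Hmat_apply_lt_one hW (fun _ => hθ) le_rfl) i j

-- Off `S` the equation for `p₀(S)` reads `M p₀(S) = 0`, so `M p₀(S)` is supported on `S`; constant
-- row sums of the `S`-block of `M⁻¹` make it constant there.
lemma p0vec_eq_smul_inv_mulVec (hW : W ∈ rowStochastic ℝ (Fin n)) (hθ : θ ∈ Set.Ioc (0 : ℝ) 1)
    (hω : ω ∈ Set.Icc (0 : ℝ) 1) {σ : ℝ} (hσ : ∀ i ∈ S, ∑ j ∈ S, (1 - (1 - θ) • W)⁻¹ i j = σ)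
    (hσω : 1 - ω + ω * σ ≠ 0) :
    p0vec W (fun _ => θ) ω S = ((1 - θ) * ω / (1 - ω + ω * σ)) •
      ((1 - (1 - θ) • W)⁻¹ *ᵥ fun j => if j ∈ S then 1 else 0) := by
  set M := 1 - (1 - θ) • W with hM
  set u := M⁻¹ *ᵥ fun j => if j ∈ S then (1 : ℝ) else 0 with hu
  have hMu : M *ᵥ u = fun j => if j ∈ S then 1 else 0 := by
    rw [hu, mulVec_mulVec,
      mul_nonsing_inv _ ((isUnit_iff_isUnit_det _).1 (isUnit_one_sub_smul hW hθ)), one_mulVec]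
  have hu_mem (i : Fin n) (hi : i ∈ S) : u i = σ := by
    rw [← hσ i hi]
    simp [hu, mulVec, dotProduct]
  refine p0vec_eq_of_mulVec_eq hW (fun _ => hθ) hω (funext fun i => ?_)
  have hH : (Hmat W (fun _ => θ) ω S *ᵥ u) i =
      (1 - if i ∈ S then ω else 0) * ((1 - θ) * (W *ᵥ u) i) := by
    simp only [mulVec, dotProduct, Hmat_apply, mul_assoc, mul_sum]
  have hMui : u i - (1 - θ) * (W *ᵥ u) i = if i ∈ S then 1 else 0 := by
    rw [← congrFun hMu i, hM, sub_mulVec, one_mulVec, smul_mulVec]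
    rfl
  rw [mulVec_smul, sub_mulVec, one_mulVec, Pi.smul_apply, Pi.sub_apply, hH, smul_eq_mul,
    sub_mulVec, one_mulVec, Pi.sub_apply, mulVec_diagonal]
  by_cases hi : i ∈ S
  · simp only [if_pos hi, hu_mem i hi] at hMui ⊢
    field_simp
    linear_combination (1 - θ) * ω * (1 - ω) * hMui
  · simp only [if_neg hi] at hMui ⊢
    linear_combination (1 - θ) * ω / (1 - ω + ω * σ) * hMui

-- Column sums of `W` being one, `𝟙ᵀ M = θ 𝟙ᵀ`.
lemma sum_inv_one_sub_smul_mulVec (hW : W ∈ doublyStochastic ℝ (Fin n))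
    (hθ : θ ∈ Set.Ioc (0 : ℝ) 1) (x : Fin n → ℝ) :
    ∑ i, ((1 - (1 - θ) • W)⁻¹ *ᵥ x) i = (∑ i, x i) / θ := by
  have hrow := (mem_doublyStochastic_iff_mem_rowStochastic_and_mem_colStochastic.1 hW).1
  have hdet := (isUnit_iff_isUnit_det _).1 (isUnit_one_sub_smul hrow hθ)
  set y := (1 - (1 - θ) • W)⁻¹ *ᵥ x with hy
  have hMy : (1 - (1 - θ) • W) *ᵥ y = x := by
    rw [hy, mulVec_mulVec, mul_nonsing_inv _ hdet, one_mulVec]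
  rw [eq_div_iff hθ.1.ne', ← hMy, sub_mulVec, one_mulVec, smul_mulVec]
  simp only [Pi.sub_apply, Pi.smul_apply, smul_eq_mul, sum_sub_distrib, ← mul_sum,
    sum_mulVec_of_mem_doublyStochastic hW]
  ring

lemma sp0_eq_of_sum_inv_eq (hW : W ∈ doublyStochastic ℝ (Fin n)) (hθ : θ ∈ Set.Ioc (0 : ℝ) 1)
    (hω : ω ∈ Set.Icc (0 : ℝ) 1) {σ : ℝ} (hσ : ∀ i ∈ S, ∑ j ∈ S, (1 - (1 - θ) • W)⁻¹ i j = σ)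
    (hσω : 1 - ω + ω * σ ≠ 0) :
    sp0 W (fun _ => θ) ω S =
      ((1 - θ) * ω / θ * (S.card / (1 - ω + ω * σ)) + 1) / (n + 1) := by
  have hrow := (mem_doublyStochastic_iff_mem_rowStochastic_and_mem_colStochastic.1 hW).1
  rw [sp0, p0vec_eq_smul_inv_mulVec hrow hθ hω hσ hσω]
  simp only [Pi.smul_apply, smul_eq_mul, ← mul_sum, sum_inv_one_sub_smul_mulVec hW hθ, sum_boole,
    filter_univ_mem]
  ring

end SocialPower

section Circulant

variable {n : ℕ} {f : Fin n → ℝ}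

lemma Cmat_isSymm (hf : ∀ i, f (-i) = f i) : (Cmat f).IsSymm :=
  (Fin.circulant_isSymm_iff.2 hf).transpose

variable [NeZero n]

lemma Cmat_mem_doublyStochastic (hf : f ∈ stdSimplex ℝ (Fin n)) :
    Cmat f ∈ doublyStochastic ℝ (Fin n) :=
  mem_doublyStochastic_iff_sum.2 ⟨fun i j => hf.1 (j - i),
    fun i => ((Equiv.subRight i).sum_comp f).trans hf.2,
    fun j => ((Equiv.subLeft j).sum_comp f).trans hf.2⟩

lemma Cmat_mem_rowStochastic (hf : f ∈ stdSimplex ℝ (Fin n)) :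
    Cmat f ∈ rowStochastic ℝ (Fin n) :=
  (mem_doublyStochastic_iff_mem_rowStochastic_and_mem_colStochastic.1
    (Cmat_mem_doublyStochastic hf)).1

lemma inv_eq_Cmat {A : Matrix (Fin n) (Fin n) ℝ} (hA : ∀ c i j, A (i + c) (j + c) = A i j) :
    A⁻¹ = Cmat (A⁻¹ 0) := by
  ext i j
  have hshift : A.submatrix (Equiv.addRight i) (Equiv.addRight i) = A := ext (hA i)
  have hinv : A⁻¹ = A⁻¹.submatrix (Equiv.addRight i) (Equiv.addRight i) := by
    rw [← inv_submatrix_equiv, hshift]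
  simpa [Cmat] using (congrFun₂ hinv 0 (j - i)).symm

/-- The generator `(m₀, …, m_{n-1})` of the circulant matrix `M⁻¹`, read off its row `0`. -/
noncomputable def invGen (θ : ℝ) (f : Fin n → ℝ) : Fin n → ℝ :=
  (Mring n θ f)⁻¹ 0

variable {θ ω : ℝ}

lemma inv_Mring_eq_Cmat (θ : ℝ) (f : Fin n → ℝ) : (Mring n θ f)⁻¹ = Cmat (invGen θ f) :=
  inv_eq_Cmat fun c i j => by simp [Mring, Cmat, one_apply]

lemma inv_Mring_apply (θ : ℝ) (f : Fin n → ℝ) (i j : Fin n) :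
    (Mring n θ f)⁻¹ i j = invGen θ f (j - i) :=
  congrFun₂ (inv_Mring_eq_Cmat θ f) i j

lemma isUnit_Mring (hf : f ∈ stdSimplex ℝ (Fin n)) (hθ : θ ∈ Set.Ioc (0 : ℝ) 1) :
    IsUnit (Mring n θ f) :=
  isUnit_one_sub_smul (Cmat_mem_rowStochastic hf) hθ

lemma invGen_nonneg (hf : f ∈ stdSimplex ℝ (Fin n)) (hθ : θ ∈ Set.Ioc (0 : ℝ) 1) (k : Fin n) :
    0 ≤ invGen θ f k :=
  inv_one_sub_smul_apply_nonneg (Cmat_mem_rowStochastic hf) hθ 0 k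

lemma invGen_neg (hf : ∀ i, f (-i) = f i) (k : Fin n) : invGen θ f (-k) = invGen θ f k := by
  have hsymm : (Mring n θ f)⁻¹.IsSymm := (isSymm_one.sub ((Cmat_isSymm hf).smul _)).inv
  have hk := hsymm.apply 0 k
  rwa [inv_Mring_apply, inv_Mring_apply, zero_sub, sub_zero] at hk

lemma invGen_eq_single_add_conv (hf : f ∈ stdSimplex ℝ (Fin n)) (hθ : θ ∈ Set.Ioc (0 : ℝ) 1)
    (k : Fin n) :
    invGen θ f k = (if k = 0 then 1 else 0) + (1 - θ) * ∑ i, f (k - i) * invGen θ f i := by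
  have hrow : (1 : Matrix (Fin n) (Fin n) ℝ) 0 k = ((Mring n θ f)⁻¹ * Mring n θ f) 0 k := by
    rw [nonsing_inv_mul _ ((isUnit_iff_isUnit_det _).1 (isUnit_Mring hf hθ))]
  rw [Mring, mul_sub, mul_one, Matrix.mul_smul, Matrix.sub_apply, Matrix.smul_apply, mul_apply,
    ← Mring, one_apply] at hrow
  simp only [inv_Mring_apply, sub_zero, Cmat, of_apply, smul_eq_mul, eq_comm (a := (0 : Fin n)),
    mul_comm (invGen θ f _)] at hrow
  rw [hrow, sub_add_cancel]

/-- The gaps `m_k - m_{k+1}` between neighbouring entries of the generator of `M⁻¹`, with `k + 1`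
taken modulo `n`. -/
noncomputable def invGap (θ : ℝ) (f : Fin n → ℝ) (k : Fin n) : ℝ :=
  invGen θ f k - invGen θ f (k + 1)

lemma invGap_eq_single_add_conv (hf : f ∈ stdSimplex ℝ (Fin n)) (hθ : θ ∈ Set.Ioc (0 : ℝ) 1)
    {k : Fin n} (hk : k + 1 ≠ 0) :
    invGap θ f k = (if k = 0 then 1 else 0) + (1 - θ) * ∑ i, f (k - i) * invGap θ f i := by
  have hshift : ∑ i, f (k + 1 - i) * invGen θ f i = ∑ i, f (k - i) * invGen θ f (i + 1) := by
    rw [← Equiv.sum_comp (Equiv.addRight (1 : Fin n)) fun i => f (k + 1 - i) * invGen θ f i]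
    simp only [Equiv.coe_addRight, add_sub_add_right_eq_sub]
  simp only [invGap, mul_sub, sum_sub_distrib]
  rw [invGen_eq_single_add_conv hf hθ k, invGen_eq_single_add_conv hf hθ (k + 1), if_neg hk, hshift]
  ring

lemma invGap_rev (hf : ∀ i, f (-i) = f i) (k : Fin n) :
    invGap θ f k.rev = -invGap θ f k := by
  obtain ⟨N, rfl⟩ := Nat.exists_eq_succ_of_ne_zero (NeZero.ne n)
  have hrev : k.rev = -(k + 1) := by
    rw [← Fin.last_sub, eq_neg_of_add_eq_zero_left (Fin.last_add_one N)]
    abel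
  have hrev_succ : k.rev + 1 = -k := by rw [hrev]; abel
  rw [invGap, invGap, hrev_succ, hrev, invGen_neg hf, invGen_neg hf, neg_sub]

lemma one_sub_add_mul_pos (hω : ω ∈ Set.Ico (0 : ℝ) 1) {σ : ℝ} (hσ : 0 ≤ σ) :
    0 < 1 - ω + ω * σ :=
  add_pos_of_pos_of_nonneg (sub_pos.2 hω.2) (mul_nonneg hω.1 hσ)

lemma sp0_Cmat_eq_of_sum_invGen_eq (hf : f ∈ stdSimplex ℝ (Fin n)) (hθ : θ ∈ Set.Ioc (0 : ℝ) 1)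
    (hω : ω ∈ Set.Ico (0 : ℝ) 1) {S : Finset (Fin n)} {σ : ℝ} (hσ₀ : 0 ≤ σ)
    (hσ : ∀ i ∈ S, ∑ j ∈ S, invGen θ f (j - i) = σ) :
    sp0 (Cmat f) (fun _ => θ) ω S =
      ((1 - θ) * ω / θ * (S.card / (1 - ω + ω * σ)) + 1) / (n + 1) := by
  simp only [← inv_Mring_apply] at hσ
  exact sp0_eq_of_sum_inv_eq (Cmat_mem_doublyStochastic hf) hθ (Set.Ico_subset_Icc_self hω) hσ
    (one_sub_add_mul_pos hω hσ₀).ne'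

lemma sp0_Cmat_pair (hf : f ∈ stdSimplex ℝ (Fin n)) (hθ : θ ∈ Set.Ioc (0 : ℝ) 1)
    (hω : ω ∈ Set.Ico (0 : ℝ) 1) (hfneg : ∀ i, f (-i) = f i) {i j : Fin n} (hij : i ≠ j) :
    sp0 (Cmat f) (fun _ => θ) ω {i, j} =
      ((1 - θ) * ω / θ * (2 / (1 - ω + ω * (invGen θ f 0 + invGen θ f (j - i)))) + 1) /
        (n + 1) := by
  have hpair := sp0_Cmat_eq_of_sum_invGen_eq hf hθ hω (S := {i, j})
    (add_nonneg (invGen_nonneg hf hθ 0) (invGen_nonneg hf hθ (j - i))) ?_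
  · rw [hpair, card_pair hij, Nat.cast_two]
  intro t ht
  rw [sum_pair hij]
  rcases mem_insert.1 ht with rfl | ht
  · rw [sub_self]
  · rw [mem_singleton.1 ht, sub_self, ← neg_sub, invGen_neg hfneg, add_comm]

lemma sp0_Cmat_le_sp0_pair (hf : f ∈ stdSimplex ℝ (Fin n)) (hθ : θ ∈ Set.Ioc (0 : ℝ) 1)
    (hω : ω ∈ Set.Ico (0 : ℝ) 1) (hfneg : ∀ i, f (-i) = f i) {x : Fin n} (hx : x ≠ 0)
    (hmin : ∀ k, invGen θ f x ≤ invGen θ f k) {S : Finset (Fin n)} (hS : S.card ≤ 2) :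
    sp0 (Cmat f) (fun _ => θ) ω S ≤ sp0 (Cmat f) (fun _ => θ) ω {0, x} := by
  set m := invGen θ f
  have hm : ∀ k, 0 ≤ m k := invGen_nonneg hf hθ
  have hscale : 0 ≤ (1 - θ) * ω / θ :=
    div_nonneg (mul_nonneg (sub_nonneg.2 hθ.2) hω.1) hθ.1.le
  have hden (k : Fin n) : 0 < 1 - ω + ω * (m 0 + m k) :=
    one_sub_add_mul_pos hω (add_nonneg (hm 0) (hm k))
  rw [sp0_Cmat_pair hf hθ hω hfneg hx.symm, sub_zero]
  interval_cases hcard : S.card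
  · obtain rfl := card_eq_zero.1 hcard
    rw [sp0_Cmat_eq_of_sum_invGen_eq hf hθ hω le_rfl (by simp), card_empty, Nat.cast_zero,
      zero_div]
    gcongr
    exact div_nonneg zero_le_two (hden x).le
  · obtain ⟨i, rfl⟩ := card_eq_one.1 hcard
    rw [sp0_Cmat_eq_of_sum_invGen_eq hf hθ hω (hm 0) (by simp [m]), card_singleton, Nat.cast_one]
    gcongr ((1 - θ) * ω / θ * ?_ + 1) / _
    rw [div_le_div_iff₀ (one_sub_add_mul_pos hω (hm 0)) (hden x)]
    linarith [hω.2, mul_le_mul_of_nonneg_left (hmin 0) hω.1]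
  · obtain ⟨i, j, hij, rfl⟩ := card_eq_two.1 hcard
    rw [sp0_Cmat_pair hf hθ hω hfneg hij]
    gcongr ((1 - θ) * ω / θ * ?_ + 1) / _
    refine div_le_div_of_nonneg_left zero_le_two (hden x) ?_
    linarith [mul_le_mul_of_nonneg_left (hmin (j - i)) hω.1]

end Circulant

section Reflection

variable {r : ℕ}

/-- The half `{0, …, r - 1}` of the odd cycle `ℤ/(2r+1)`: together with the point `r` fixed by the
reflection `Fin.rev`, it is a fundamental domain for that reflection. -/
def halfRing (k : Fin r) : Fin (2 * r + 1) :=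
  k.castLE (by omega)

lemma halfRing_add_one (k : Fin r) : halfRing k + 1 = ⟨k + 1, by omega⟩ :=
  Fin.ext (Fin.val_add_one_of_lt
    (Fin.lt_def.2 (k.isLt.trans_le (Nat.le_mul_of_pos_left r two_pos))))

lemma sum_eq_add_sum_halfRing {A : Type*} [AddCommMonoid A] (F : Fin (2 * r + 1) → A) :
    ∑ i, F i = F ⟨r, by omega⟩ + ∑ k : Fin r, (F (halfRing k) + F (halfRing k).rev) := by
  have hlen : r + (r + 1) = 2 * r + 1 := by ring
  have hupper : ∑ i : Fin r, F (Fin.cast hlen (Fin.natAdd r i.succ)) =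
      ∑ k : Fin r, F (halfRing k).rev := by
    refine Fintype.sum_equiv Fin.revPerm _ _ fun i => congrArg F (Fin.ext ?_)
    simp only [halfRing, Fin.val_cast, Fin.val_natAdd, Fin.val_succ, Fin.val_rev, Fin.val_castLE,
      Fin.revPerm_apply]
    omega
  rw [← Fin.sum_congr' F hlen, Fin.sum_univ_add, Fin.sum_univ_succ, hupper, sum_add_distrib,
    add_left_comm]
  rfl

lemma sum_mul_eq_sum_halfRing {g : Fin (2 * r + 1) → ℝ} (hg : ∀ i, g i.rev = -g i)
    (F : Fin (2 * r + 1) → ℝ) :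
    ∑ i, F i * g i = ∑ k, (F (halfRing k) - F (halfRing k).rev) * g (halfRing k) := by
  have hmid : g ⟨r, by omega⟩ = 0 := by
    have hrev : Fin.rev (⟨r, by omega⟩ : Fin (2 * r + 1)) = ⟨r, by omega⟩ := by
      ext
      simp only [Fin.val_rev]
      omega
    have hself := hg ⟨r, by omega⟩
    rw [hrev] at hself
    linarith
  rw [sum_eq_add_sum_halfRing, hmid, mul_zero, zero_add]
  refine sum_congr rfl fun k _ => ?_
  rw [hg]
  ring

/-- The kernel of the walk with step weights `w` on the odd cycle `ℤ/(2r+1)`, killed by the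
reflection `Fin.rev`: the weight of `k → j` minus that of `k → rev j`, for `k`, `j` in the half
`{0, …, r - 1}`. -/
def reflectedKernel (r : ℕ) (w : ℕ → ℝ) : Matrix (Fin r) (Fin r) ℝ :=
  of fun k j => w (Nat.dist k j) - w (min (k + j + 1) (2 * r - k - j))

end Reflection

section Ring

lemma exists_succ_lt_of_lt {α : Type*} [LinearOrder α] {u : ℕ → α} {a b : ℕ} (hab : a ≤ b)
    (hlt : u b < u a) :
    ∃ d, a ≤ d ∧ d < b ∧ u (d + 1) < u d := by
  by_contra! hle
  have hmono : MonotoneOn u (Set.Icc a b) := monotoneOn_of_le_add_one Set.ordConnected_Icc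
    fun d _ hd hd' => hle d hd.1 (Nat.lt_of_succ_le hd'.2)
  exact hlt.not_ge (hmono ⟨le_rfl, hab⟩ ⟨hab, le_rfl⟩ hab)

lemma ringGen_sub {n : ℕ} (w : ℕ → ℝ) (i j : Fin n) :
    ringGen n w (i - j) = w (min (Nat.dist i j) (n - Nat.dist i j)) := by
  have hi := i.isLt
  have hj := j.isLt
  rw [ringGen, Nat.dist]
  congr 1
  rcases le_or_gt j i with h | h
  · rw [Fin.coe_sub_iff_le.2 h]
    omega
  · rw [Fin.coe_sub_iff_lt.2 h]
    omega

lemma ringGen_neg {n : ℕ} [NeZero n] (w : ℕ → ℝ) (i : Fin n) :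
    ringGen n w (-i) = ringGen n w i := by
  rw [← zero_sub, ringGen_sub, ← sub_zero i, ringGen_sub, Nat.dist_comm, sub_zero]

variable {r : ℕ} {w : ℕ → ℝ}

lemma sum_ringGen (r : ℕ) (w : ℕ → ℝ) :
    ∑ i, ringGen (2 * r + 1) w i = w 0 + 2 * ∑ ℓ ∈ Icc 1 r, w ℓ := by
  have hmid : ringGen (2 * r + 1) w ⟨r, by omega⟩ = w r := congrArg w (by simp only; omega)
  have hhalf (k : Fin r) : ringGen (2 * r + 1) w (halfRing k) = w k :=
    congrArg w (by simp only [halfRing, Fin.val_castLE]; omega)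
  have hrev (k : Fin r) : ringGen (2 * r + 1) w (halfRing k).rev = w (k + 1) :=
    congrArg w (by simp only [halfRing, Fin.val_rev, Fin.val_castLE]; omega)
  have hIcc : ∑ ℓ ∈ Icc 1 r, w ℓ = ∑ k ∈ range r, w (k + 1) := by
    rw [range_eq_Ico, sum_Ico_add' w 0 r 1, zero_add, Ico_add_one_right_eq_Icc]
  have htelescope : ∑ k ∈ range r, w k + w r = ∑ k ∈ range r, w (k + 1) + w 0 := by
    rw [← sum_range_succ, sum_range_succ']
  simp only [sum_eq_add_sum_halfRing, hmid, hhalf, hrev, sum_add_distrib]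
  rw [Fin.sum_univ_eq_sum_range w, Fin.sum_univ_eq_sum_range fun k => w (k + 1), hIcc]
  linarith

lemma ringGen_mem_stdSimplex (hw : AntitoneOn w (Set.Iic r)) (hlast : 0 ≤ w r)
    (hsum : w 0 + 2 * ∑ ℓ ∈ Icc 1 r, w ℓ = 1) :
    ringGen (2 * r + 1) w ∈ stdSimplex ℝ (Fin (2 * r + 1)) := by
  refine ⟨fun i => ?_, by rw [sum_ringGen, hsum]⟩
  have hle : min i.val (2 * r + 1 - i.val) ≤ r := by omega
  exact hlast.trans (hw hle (Set.mem_Iic.2 le_rfl) hle)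

lemma reflectedKernel_apply_eq_ringGen_sub (w : ℕ → ℝ) (k j : Fin r) :
    reflectedKernel r w k j = ringGen (2 * r + 1) w (halfRing k - halfRing j) -
      ringGen (2 * r + 1) w (halfRing k - (halfRing j).rev) := by
  rw [ringGen_sub, ringGen_sub]
  simp only [reflectedKernel, of_apply, halfRing, Fin.val_rev, Fin.val_castLE, Nat.dist]
  congr 2 <;> omega

lemma reflectedKernel_apply_nonneg (hw : AntitoneOn w (Set.Iic r)) (k j : Fin r) :
    0 ≤ reflectedKernel r w k j := by
  refine sub_nonneg.2 (hw ?_ ?_ ?_) <;> simp only [Set.mem_Iic, Nat.dist] <;> omega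

lemma reflectedKernel_apply_pos (hw : AntitoneOn w (Set.Iic r)) {d : ℕ} (hdr : d < r)
    (hd : w (d + 1) < w d) {k j : Fin r} (hdist : Nat.dist k j ≤ d) (hlo : d ≤ k + j)
    (hhi : k + j + d < 2 * r) : 0 < reflectedKernel r w k j := by
  refine sub_pos.2 ?_
  have hfar : d + 1 ≤ min ((k : ℕ) + j + 1) (2 * r - k - j) := by omega
  calc w (min (k + j + 1) (2 * r - k - j))
      ≤ w (d + 1) := hw (Set.mem_Iic.2 hdr) (Set.mem_Iic.2 (by omega)) hfar
    _ < w d := hd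
    _ ≤ w (Nat.dist k j) := hw (Set.mem_Iic.2 (hdist.trans hdr.le)) (Set.mem_Iic.2 hdr.le) hdist

lemma sum_reflectedKernel_apply_le_one (hw : ringGen (2 * r + 1) w ∈ stdSimplex ℝ _) (k : Fin r) :
    ∑ j, reflectedKernel r w k j ≤ 1 := by
  set F := fun i => ringGen (2 * r + 1) w (halfRing k - i) with hF
  have hnonneg (i : Fin (2 * r + 1)) : 0 ≤ F i := hw.1 _
  calc ∑ j, reflectedKernel r w k j
      = ∑ j : Fin r, (F (halfRing j) - F (halfRing j).rev) := by
        simp only [reflectedKernel_apply_eq_ringGen_sub, hF]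
    _ ≤ ∑ j : Fin r, (F (halfRing j) + F (halfRing j).rev) :=
        sum_le_sum fun j _ => by linarith [hnonneg (halfRing j).rev]
    _ ≤ ∑ i, F i := by
        rw [sum_eq_add_sum_halfRing]
        exact le_add_of_nonneg_left (hnonneg _)
    _ = 1 := ((Equiv.subLeft (halfRing k)).sum_comp _).trans hw.2

-- A drop of `w` at `d` lets positivity travel `k - d → k` and, for `k < d`, along
-- `k - 1 → d + 1 - k → k`.
lemma pos_of_reflectedKernel_mulVec_le (hw : AntitoneOn w (Set.Iic r)) (hr : 0 < r)
    (hlt : w r < w 1) {c : ℝ} (hc : 0 < c) {g : Fin r → ℝ} (hg : 0 ≤ g)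
    (hQg : (c • reflectedKernel r w) *ᵥ g ≤ g) (hg₀ : 0 < g ⟨0, hr⟩) (k : Fin r) : 0 < g k := by
  obtain ⟨d, hd, hdr, hdrop⟩ := exists_succ_lt_of_lt hr hlt
  have spread {k j : Fin r} (hdist : Nat.dist k j ≤ d) (hlo : d ≤ k + j) (hhi : k + j + d < 2 * r)
      (hj : 0 < g j) : 0 < g k :=
    pos_of_mulVec_le
      (fun i j => mul_nonneg hc.le (reflectedKernel_apply_nonneg hw i j)) hg hQg
      (mul_pos hc (reflectedKernel_apply_pos hw hdr hdrop hdist hlo hhi)) hj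
  obtain ⟨k, hk⟩ := k
  induction k using Nat.strong_induction_on with
  | _ k ih =>
    rcases k.eq_zero_or_pos with rfl | hk₀
    · exact hg₀
    rcases le_or_gt d k with hdk | hkd
    · refine spread (j := ⟨k - d, by omega⟩) ?_ ?_ ?_ (ih (k - d) (by omega) _) <;>
        simp only [Nat.dist] <;> omega
    · have hpred : 0 < g ⟨k - 1, by omega⟩ := ih (k - 1) (by omega) _
      have hmid : 0 < g ⟨d + 1 - k, by omega⟩ := by
        refine spread ?_ ?_ ?_ hpred <;> simp only [Nat.dist] <;> omega
      refine spread ?_ ?_ ?_ hmid <;> simp only [Nat.dist] <;> omega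

variable {θ : ℝ}

lemma invGap_halfRing_eq (hw : ringGen (2 * r + 1) w ∈ stdSimplex ℝ _)
    (hθ : θ ∈ Set.Ioc (0 : ℝ) 1) (k : Fin r) :
    invGap θ (ringGen (2 * r + 1) w) (halfRing k) = (if (k : ℕ) = 0 then 1 else 0) +
      (((1 - θ) • reflectedKernel r w) *ᵥ (invGap θ (ringGen (2 * r + 1) w) ∘ halfRing)) k := by
  have hsucc : halfRing k + 1 ≠ 0 := by
    rw [halfRing_add_one]
    exact Fin.ne_of_val_ne (Nat.succ_ne_zero _)
  have hzero : halfRing k = 0 ↔ (k : ℕ) = 0 := Fin.ext_iff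
  rw [invGap_eq_single_add_conv hw hθ hsucc, sum_mul_eq_sum_halfRing (invGap_rev (ringGen_neg w)),
    smul_mulVec, Pi.smul_apply, smul_eq_mul]
  simp only [← reflectedKernel_apply_eq_ringGen_sub, hzero, mulVec, dotProduct,
    Function.comp_apply]

lemma reflectedKernel_mulVec_invGap_le (hw : ringGen (2 * r + 1) w ∈ stdSimplex ℝ _)
    (hθ : θ ∈ Set.Ioc (0 : ℝ) 1) :
    ((1 - θ) • reflectedKernel r w) *ᵥ (invGap θ (ringGen (2 * r + 1) w) ∘ halfRing) ≤
      invGap θ (ringGen (2 * r + 1) w) ∘ halfRing := by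
  intro k
  rw [Function.comp_apply, invGap_halfRing_eq hw hθ k]
  exact le_add_of_nonneg_left (by positivity)

lemma invGap_comp_halfRing_nonneg (hw : AntitoneOn w (Set.Iic r))
    (hw₁ : ringGen (2 * r + 1) w ∈ stdSimplex ℝ _) (hθ : θ ∈ Set.Ioc (0 : ℝ) 1) :
    0 ≤ invGap θ (ringGen (2 * r + 1) w) ∘ (halfRing (r := r)) := by
  have hθ₁ : 0 ≤ 1 - θ := sub_nonneg.2 hθ.2
  refine nonneg_of_mulVec_le
    (fun k j => mul_nonneg hθ₁ (reflectedKernel_apply_nonneg hw k j)) (fun k => ?_)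
    (reflectedKernel_mulVec_invGap_le hw₁ hθ)
  calc ∑ j, (1 - θ) * reflectedKernel r w k j
      = (1 - θ) * ∑ j, reflectedKernel r w k j := (mul_sum ..).symm
    _ ≤ 1 - θ := mul_le_of_le_one_right hθ₁ (sum_reflectedKernel_apply_le_one hw₁ k)
    _ < 1 := sub_lt_self 1 hθ.1

lemma invGap_halfRing_pos (hw : AntitoneOn w (Set.Iic r)) (hlt : w r < w 1)
    (hw₁ : ringGen (2 * r + 1) w ∈ stdSimplex ℝ _) (hθ : θ ∈ Set.Ioo (0 : ℝ) 1) (k : Fin r) :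
    0 < invGap θ (ringGen (2 * r + 1) w) (halfRing k) := by
  have hθ' := Set.Ioo_subset_Ioc_self hθ
  have hc : 0 < 1 - θ := sub_pos.2 hθ.2
  have hg := invGap_comp_halfRing_nonneg hw hw₁ hθ'
  refine pos_of_reflectedKernel_mulVec_le hw k.pos hlt hc hg
    (reflectedKernel_mulVec_invGap_le hw₁ hθ') ?_ k
  rw [Function.comp_apply, invGap_halfRing_eq hw₁ hθ', if_pos rfl]
  exact add_pos_of_pos_of_nonneg one_pos (dotProduct_nonneg_of_nonneg
    (fun j => mul_nonneg hc.le (reflectedKernel_apply_nonneg hw _ j)) hg)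

lemma invGen_ringGen_succ_lt (hw : AntitoneOn w (Set.Iic r)) (hlt : w r < w 1)
    (hw₁ : ringGen (2 * r + 1) w ∈ stdSimplex ℝ _) (hθ : θ ∈ Set.Ioo (0 : ℝ) 1) {k : ℕ}
    (hk : k < r) :
    invGen θ (ringGen (2 * r + 1) w) ⟨k + 1, by omega⟩ <
      invGen θ (ringGen (2 * r + 1) w) ⟨k, by omega⟩ := by
  have hgap := sub_pos.1 (invGap_halfRing_pos hw hlt hw₁ hθ ⟨k, hk⟩)
  rwa [halfRing_add_one] at hgap

lemma invGen_ringGen_mid_le (hw : AntitoneOn w (Set.Iic r)) (hlt : w r < w 1)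
    (hw₁ : ringGen (2 * r + 1) w ∈ stdSimplex ℝ _) (hθ : θ ∈ Set.Ioo (0 : ℝ) 1)
    (x : Fin (2 * r + 1)) :
    invGen θ (ringGen (2 * r + 1) w) ⟨r, by omega⟩ ≤ invGen θ (ringGen (2 * r + 1) w) x := by
  have hlower (k : ℕ) (hk : k ≤ r) : invGen θ (ringGen (2 * r + 1) w) ⟨r, by omega⟩ ≤
      invGen θ (ringGen (2 * r + 1) w) ⟨k, by omega⟩ := by
    induction hk using Nat.decreasingInduction with
    | self => exact le_rfl
    | of_succ k hk ih => exact ih.trans (invGen_ringGen_succ_lt hw hlt hw₁ hθ hk).le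
  rcases le_or_gt x.val r with hx | hx
  · exact hlower x hx
  · have hneg : (-x).val = 2 * r + 1 - x := by
      rw [Fin.val_neg, if_neg (by rintro rfl; simp at hx)]
    rw [← invGen_neg (ringGen_neg w) x]
    exact hlower (-x).val (by omega)

lemma invGen_ringGen_mid_succ (hr : 0 < r) :
    invGen θ (ringGen (2 * r + 1) w) ⟨r + 1, by omega⟩ =
      invGen θ (ringGen (2 * r + 1) w) ⟨r, by omega⟩ := by
  have hneg : (⟨r + 1, by omega⟩ : Fin (2 * r + 1)) = -⟨r, by omega⟩ :=
    eq_neg_of_add_eq_zero_left (Fin.ext (by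
      simp only [Fin.val_add, Fin.val_zero]
      rw [show r + 1 + r = 2 * r + 1 by ring, Nat.mod_self]))
  rw [hneg, invGen_neg (ringGen_neg w)]

end Ring

/-- Odd ring graph: the generating entries of `M⁻¹` are strictly decreasing, and the
antipodal pair `{1, s}` is optimal for `K = 2` (with `{1, s+1}` equally good). -/
theorem ring_graph_odd_optimal
    (s n : ℕ) (hs : 2 ≤ s) (hn : n = 2 * s - 1)
    (w : ℕ → ℝ)
    (hmono : ∀ ℓ : ℕ, ℓ + 1 ≤ s - 1 → w (ℓ + 1) ≤ w ℓ)
    (hlast : 0 ≤ w (s - 1)) (h0 : 0 < w 0) (h1 : w (s - 1) < w 1)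
    (hsum : w 0 + 2 * ∑ ℓ ∈ Finset.Icc 1 (s - 1), w ℓ = 1)
    (θ : ℝ) (hθ : θ ∈ Set.Ioo (0 : ℝ) 1) (ω : ℝ) (hω : ω ∈ Set.Ioo (0 : ℝ) 1) :
    IsUnit (Mring n θ (ringGen n w)) ∧
    (Mring n θ (ringGen n w))⁻¹ =
      Cmat (fun k => (Mring n θ (ringGen n w))⁻¹ ⟨0, by omega⟩ k) ∧
    (∀ k : ℕ, ∀ hk : k + 1 ≤ s - 1,
      (Mring n θ (ringGen n w))⁻¹ ⟨0, by omega⟩ ⟨k + 1, by omega⟩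
        < (Mring n θ (ringGen n w))⁻¹ ⟨0, by omega⟩ ⟨k, by omega⟩) ∧
    (∀ S : Finset (Fin n), S.card ≤ 2 →
      sp0 (Cmat (ringGen n w)) (fun _ => θ) ω S
        ≤ sp0 (Cmat (ringGen n w)) (fun _ => θ) ω {⟨0, by omega⟩, ⟨s - 1, by omega⟩}) ∧
    sp0 (Cmat (ringGen n w)) (fun _ => θ) ω {⟨0, by omega⟩, ⟨s, by omega⟩}
      = sp0 (Cmat (ringGen n w)) (fun _ => θ) ω {⟨0, by omega⟩, ⟨s - 1, by omega⟩} := by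
  obtain ⟨r, rfl⟩ : ∃ r, s = r + 1 := ⟨s - 1, by omega⟩
  obtain rfl : n = 2 * r + 1 := by omega
  rw [Nat.add_sub_cancel] at hlast h1 hsum
  have hr : 0 < r := by omega
  have hw : AntitoneOn w (Set.Iic r) := antitoneOn_of_add_one_le Set.ordConnected_Iic
    fun ℓ _ _ hℓ => hmono ℓ hℓ
  have hf := ringGen_mem_stdSimplex hw hlast hsum
  have hθ' := Set.Ioo_subset_Ioc_self hθ
  have hω' := Set.Ioo_subset_Ico_self hω
  have hmid : (⟨r, by omega⟩ : Fin (2 * r + 1)) ≠ 0 := Fin.ne_of_val_ne hr.ne'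
  have hmid_succ : (⟨r + 1, by omega⟩ : Fin (2 * r + 1)) ≠ 0 :=
    Fin.ne_of_val_ne r.succ_ne_zero
  refine ⟨isUnit_Mring hf hθ', inv_Mring_eq_Cmat .., fun k hk => ?_, fun S hS => ?_, ?_⟩
  · exact invGen_ringGen_succ_lt hw h1 hf hθ hk
  · exact sp0_Cmat_le_sp0_pair hf hθ' hω' (ringGen_neg w) hmid
      (invGen_ringGen_mid_le hw h1 hf hθ) hS
  · have hpair {x : Fin (2 * r + 1)} (hx : x ≠ 0) :=
      sp0_Cmat_pair hf hθ' hω' (ringGen_neg w) hx.symm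
    refine (hpair hmid_succ).trans (Eq.trans ?_ (hpair hmid).symm)
    rw [sub_zero, sub_zero, invGen_ringGen_mid_succ hr]
end
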